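/- arXiv:2002.06376 — 2 statements merged into one kernel-verified Lean document; each statement's English description precedes it below -/
import Mathlib

section
/- Let Q > 1 be an integer, ζ_Q = exp(2πi/Q), and let π, σ be permutations of ℤ/Qℤ. For integers a, b, u, b̂, û with (b mod Q, u mod Q) ≠ (b̂ mod Q, û mod Q), the Hermitian inner product of F_{a,b,u} and F_{a,b̂,û} is zero, i.e., ∑_{(i,j) ∈ (ℤ/Qℤ)²} (1/Q²)·ζ_Q^{j(aπ(i)+b)+uσ(i)} · conj(ζ_Q^{j(aπ(i)+b̂)+ûσ(i)}) = 0. -/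
/-!
Powers of `ζ_Q` are the values of a primitive additive character `ψ` of `ℤ/Qℤ`. In each term of the
inner product the phase `j * a * π(i)` cancels against its conjugate, leaving
`ψ ((u - u') * σ(i) + (b - b') * j)`. Reindexing by the bijection `σ` makes the double sum factor
into two one-variable character sums, and primitivity of `ψ` kills one whose coefficient is nonzero.
-/

section AddChar

open ComplexConjugate

lemma addChar_apply_mul_conj {G K : Type*} [AddCommGroup G] [Finite G] [RCLike K]
    (ψ : AddChar G K) (x y : G) : ψ x * conj (ψ y) = ψ (x - y) := by
  rw [← AddChar.map_neg_eq_conj, ← AddChar.map_add_eq_mul, sub_eq_add_neg]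

variable {R : Type*} [CommRing R] [Fintype R]

lemma sum_addChar_mul_add_mul_eq_zero {K : Type*} [CommRing K] [IsDomain K] {ψ : AddChar R K}
    (hψ : ψ.IsPrimitive) {v : R × R} (hv : v ≠ 0) :
    ∑ k : R × R, ψ (v.1 * k.1 + v.2 * k.2) = 0 := by
  have sum_mul_eq_zero {c : R} (hc : c ≠ 0) : ∑ x, ψ (c * x) = 0 :=
    AddChar.sum_eq_zero_of_ne_one (hψ hc)
  have sum_eq_mul_sum :
      ∑ k : R × R, ψ (v.1 * k.1 + v.2 * k.2) = (∑ x, ψ (v.1 * x)) * ∑ y, ψ (v.2 * y) := by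
    simp only [AddChar.map_add_eq_mul, Fintype.sum_prod_type, Finset.sum_mul_sum]
  rw [sum_eq_mul_sum, mul_eq_zero]
  by_cases hv₁ : v.1 = 0
  · have hv₂ : v.2 ≠ 0 := fun hv₂ ↦ hv (Prod.ext hv₁ hv₂)
    exact .inr (sum_mul_eq_zero hv₂)
  · exact .inl (sum_mul_eq_zero hv₁)

theorem inner_F_eq_zero_same_a_general {ι K : Type*} [Fintype ι] [RCLike K] {ψ : AddChar R K}
    (hψ : ψ.IsPrimitive) (f : ι → R) (σ : ι ≃ R) {b u b' u' : R} (h : (b, u) ≠ (b', u')) :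
    ∑ k : ι × R, (1 / (Fintype.card R : K) ^ 2) * ψ (k.2 * (f k.1 + b) + u * σ k.1) *
      conj (ψ (k.2 * (f k.1 + b') + u' * σ k.1)) = 0 := by
  have phase_sub (k : ι × R) :
      k.2 * (f k.1 + b) + u * σ k.1 - (k.2 * (f k.1 + b') + u' * σ k.1) =
        (u - u') * σ k.1 + (b - b') * k.2 := by ring
  have hv : (u - u', b - b') ≠ 0 := fun hv ↦ by
    obtain ⟨hu, hb⟩ := Prod.mk_eq_zero.mp hv
    exact h (Prod.ext (sub_eq_zero.mp hb) (sub_eq_zero.mp hu))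
  have sum_reindex :
      ∑ k : ι × R, ψ ((u - u') * σ k.1 + (b - b') * k.2) =
        ∑ k : R × R, ψ ((u - u') * k.1 + (b - b') * k.2) :=
    (σ.prodCongr (.refl R)).sum_comp fun k ↦ ψ ((u - u') * k.1 + (b - b') * k.2)
  simp only [mul_assoc, addChar_apply_mul_conj, phase_sub, ← Finset.mul_sum]
  rw [sum_reindex, sum_addChar_mul_add_mul_eq_zero hψ hv, mul_zero]

end AddChar

lemma exp_two_pi_I_div_pow_val_eq_stdAddChar (N : ℕ) [NeZero N] (x : ZMod N) :
    Complex.exp (2 * Real.pi * Complex.I / N) ^ x.val = ZMod.stdAddChar x := by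
  rw [ZMod.stdAddChar_apply, ZMod.toCircle_apply, ← Complex.exp_nat_mul]
  congr 1
  ring

/-- Let `Q > 1`, `ζ_Q = exp(2πi/Q)`, and `π, σ` permutations of `ℤ/Qℤ`.
For integers `a, b, u, b̂, û` with `(b mod Q, u mod Q) ≠ (b̂ mod Q, û mod Q)`, the
Hermitian inner product of `F_{a,b,u}` and `F_{a,b̂,û}` is zero. -/
theorem inner_F_eq_zero_same_a (Q : ℕ) [NeZero Q] (hQ : 1 < Q)
    (pe se : Equiv.Perm (ZMod Q)) (a b u b' u' : ℤ)
    (h : ((b : ZMod Q), (u : ZMod Q)) ≠ ((b' : ZMod Q), (u' : ZMod Q))) :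
    ∑ k : ZMod Q × ZMod Q,
      (1 / (Q : ℂ) ^ 2) *
        (Complex.exp (2 * Real.pi * Complex.I / Q) ^
          (k.2 * ((a : ZMod Q) * pe k.1 + (b : ZMod Q)) + (u : ZMod Q) * se k.1).val) *
        (starRingEnd ℂ) (Complex.exp (2 * Real.pi * Complex.I / Q) ^
          (k.2 * ((a : ZMod Q) * pe k.1 + (b' : ZMod Q)) + (u' : ZMod Q) * se k.1).val)
      = 0 := by
  simpa only [exp_two_pi_I_div_pow_val_eq_stdAddChar, ZMod.card] using
    inner_F_eq_zero_same_a_general (ZMod.isPrimitive_stdAddChar Q) (fun i ↦ a * pe i) se h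
end

section
/- For every real ε > 0 there exists M such that for every integer Q > 2 whose smallest prime factor p_min satisfies p_min > M, the ratio of I_max = 1/(Q−1) to the Welch bound I_W = √(p_min·Q/((p_min·Q² + Q² − Q − 1)(Q−1))) satisfies |I_max/I_W − 1| < ε. That is, I_max/I_W tends to 1 as p_min → ∞, so the codebook of Theorem 3 is asymptotically optimal with respect to the Welch bound. -/
/-!
For real `p` and `q` in place of the smallest prime factor and `Q`, the ratio of the maximal
correlation to the Welch bound is `√(1 + δ)` with `δ = 1/p + 1/(q - 1) - 1/(p * q * (q - 1))`.
Since `√(1 + δ) ≤ 1 + δ / 2`, it exceeds `1` by at most the average of `1/p` and `1/(q - 1)`.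
The smallest prime factor of `Q` is at most `Q`, so both terms are small once that factor is large.
-/

lemma abs_sqrt_one_add_sub_one_le {x : ℝ} (hx : 0 ≤ x) : |√(1 + x) - 1| ≤ x / 2 := by
  have hone_le : 1 ≤ √(1 + x) := Real.one_le_sqrt.mpr (by linarith)
  rw [abs_of_nonneg (sub_nonneg.mpr hone_le), sub_le_iff_le_add']
  exact Real.sqrt_one_add_le (by linarith)

/-- The Welch bound: the lower bound `√((N - K) / ((N - 1) * K))` for the maximal correlation of a
codebook of `N` unit vectors in dimension `K`. Both parameters are real, so that subtraction does
not truncate and so that `N` and `K` may be given by formulas in real variables. -/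
noncomputable def welchBound (N K : ℝ) : ℝ :=
  √((N - K) / ((N - 1) * K))

lemma div_welchBound_eq_sqrt {c : ℝ} (hc : 0 ≤ c) (N K : ℝ) :
    c / welchBound N K = √(c ^ 2 * ((N - 1) * K) / (N - K)) := by
  rw [← div_div_eq_mul_div, Real.sqrt_div (sq_nonneg c), Real.sqrt_sq hc, welchBound]

section SecondConstruction

variable {p q : ℝ}

lemma welchBound_secondConstruction (p : ℝ) (hq : q ≠ 0) :
    welchBound (p * q ^ 2 + q ^ 2 - q) (q * (q - 1)) =
      √(p * q / ((p * q ^ 2 + q ^ 2 - q - 1) * (q - 1))) := by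
  have hsub : p * q ^ 2 + q ^ 2 - q - q * (q - 1) = q * (p * q) := by ring
  rw [welchBound, hsub, mul_left_comm _ q, mul_div_mul_left _ _ hq]

lemma correlation_div_welchBound_eq_sqrt (hp : p ≠ 0) (hq : 1 < q) :
    1 / (q - 1) / welchBound (p * q ^ 2 + q ^ 2 - q) (q * (q - 1)) =
      √(1 + (1 / p + 1 / (q - 1) - 1 / (p * q * (q - 1)))) := by
  have hq₀ : q ≠ 0 := by linarith
  have hq₁ : 0 < q - 1 := sub_pos.mpr hq
  have hsub : p * q ^ 2 + q ^ 2 - q - q * (q - 1) = p * q ^ 2 := by ring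
  rw [div_welchBound_eq_sqrt (one_div_nonneg.mpr hq₁.le), hsub]
  congr 1
  field_simp
  ring

lemma abs_correlation_div_welchBound_sub_one_le (hp : 1 ≤ p) (hq : 1 < q) :
    |1 / (q - 1) / welchBound (p * q ^ 2 + q ^ 2 - q) (q * (q - 1)) - 1| ≤
      (1 / p + 1 / (q - 1)) / 2 := by
  have hp₀ : 0 < p := by linarith
  have hq₁ : 0 < q - 1 := sub_pos.mpr hq
  have hpos : 0 < 1 / (p * q * (q - 1)) := by positivity
  have hle : 1 / (p * q * (q - 1)) ≤ 1 / (q - 1) :=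
    one_div_le_one_div_of_le hq₁ <|
      le_mul_of_one_le_left hq₁.le (one_le_mul_of_one_le_of_one_le hp hq.le)
  rw [correlation_div_welchBound_eq_sqrt hp₀.ne' hq]
  calc |√(1 + (1 / p + 1 / (q - 1) - 1 / (p * q * (q - 1)))) - 1|
      ≤ (1 / p + 1 / (q - 1) - 1 / (p * q * (q - 1))) / 2 :=
        abs_sqrt_one_add_sub_one_le (by linarith [one_div_pos.mpr hp₀])
    _ ≤ (1 / p + 1 / (q - 1)) / 2 := by linarith

theorem asymptotic_welch_second_construction_general {ε : ℝ} (hε : 0 < ε)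
    (hp : 1 + 1 / ε < p) (hq : 1 + 1 / ε < q) :
    |1 / (q - 1) / welchBound (p * q ^ 2 + q ^ 2 - q) (q * (q - 1)) - 1| < ε := by
  have hε_inv : 0 < 1 / ε := one_div_pos.mpr hε
  have hp_inv : 1 / p < ε := (one_div_lt (by linarith) hε).mpr (by linarith)
  have hq_inv : 1 / (q - 1) < ε := (one_div_lt (by linarith) hε).mpr (by linarith)
  have hbound := abs_correlation_div_welchBound_sub_one_le (p := p) (q := q)
    (by linarith) (by linarith)
  linarith

end SecondConstruction

/-- For every `ε > 0` there exists `M` such that for every integer `Q > 2`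
whose smallest prime factor `p_min` satisfies `p_min > M`, the ratio of
`I_max = 1/(Q−1)` to the Welch bound `I_W = √(p_min·Q/((p_min·Q² + Q² − Q − 1)(Q−1)))`
satisfies `|I_max/I_W − 1| < ε`; i.e. the codebook of Theorem 3 is asymptotically
optimal with respect to the Welch bound as `p_min → ∞`. -/
theorem asymptotic_welch_second_construction :
    ∀ ε : ℝ, 0 < ε → ∃ M : ℝ, ∀ Q : ℕ, 2 < Q → M < (Q.minFac : ℝ) →
      |(1 / ((Q : ℝ) - 1)) /
          Real.sqrt ((Q.minFac : ℝ) * (Q : ℝ) /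
            (((Q.minFac : ℝ) * (Q : ℝ) ^ 2 + (Q : ℝ) ^ 2 - (Q : ℝ) - 1) * ((Q : ℝ) - 1)))
        - 1| < ε := by
  intro ε hε
  refine ⟨1 + 1 / ε, fun Q hQ hM => ?_⟩
  have hle : (Q.minFac : ℝ) ≤ Q := by exact_mod_cast Nat.minFac_le (by lia)
  rw [← welchBound_secondConstruction _ (by positivity)]
  exact asymptotic_welch_second_construction_general hε hM (hM.trans_le hle)
end
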